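/- arXiv:math/0103141 — 2 statements merged into one kernel-verified Lean document; each statement's English description precedes it below -/
import Mathlib

section
/- Let 𝔤 ⋉ 𝔥 be the semidirect product of two finite-dimensional real Lie algebras with inner products, with action b and associated bilinear map h, and let R̃, R^G, R^H denote the curvatures of the right-invariant metrics on 𝔤 ⋉ 𝔥, 𝔤, 𝔥 respectively. Then for all X₁,X₂ ∈ 𝔤 and Y₁,Y₂ ∈ 𝔥: ⟨R̃((X₁,Y₁),(X₂,Y₂))(X₂,Y₂),(X₁,Y₁)⟩ = ⟨R^G(X₁,X₂)X₂,X₁⟩ + ⟨R^H(Y₁,Y₂)Y₂,Y₁⟩ + (1/4)‖h(Y₁,Y₂)+h(Y₂,Y₁)‖² − ⟨h(Y₁,Y₁),h(Y₂,Y₂)⟩ − (1/2)⟨h(Y₁,Y₂)+h(Y₂,Y₁), ad(X₁)ᵀX₂+ad(X₂)ᵀX₁⟩ + ⟨h(Y₁,Y₁), ad(X₂)ᵀX₂⟩ + ⟨h(Y₂,Y₂), ad(X₁)ᵀX₁⟩ + (1/4)‖b(X₁)ᵀY₂+b(X₂)ᵀY₁‖² − (3/4)‖b(X₁)Y₂−b(X₂)Y₁‖²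 − ⟨b(X₁)ᵀY₁, b(X₂)ᵀY₂⟩ − (1/2)⟨b(X₁)ᵀY₁, b(X₂)Y₂⟩ − (1/2)⟨b(X₂)ᵀY₂, b(X₁)Y₁⟩ + ⟨b(X₁)ᵀY₂, b(X₂)Y₁⟩ + ⟨b(X₂)ᵀY₁, b(X₁)Y₂⟩ − (1/2)⟨b(X₁)ᵀY₂, b(X₁)Y₂⟩ − (1/2)⟨b(X₂)ᵀY₁, b(X₂)Y₁⟩ − ⟨ad(Y₁)ᵀY₁, b(X₂)ᵀY₂⟩ − ⟨ad(Y₂)ᵀY₂, b(X₁)ᵀY₁⟩ + (1/2)⟨ad(Y₁)ᵀY₂, b(X₁)ᵀY₂ + b(X₂)ᵀY₁ − b(X₁)Y₂ + b(X₂)Y₁⟩ + (1/2)⟨ad(Y₂)ᵀY₁, b(X₁)ᵀY₂ + b(X₂)ᵀY₁ − b(X₂)Y₁ + b(X₁)Y₂⟩ − (1/2)⟨[Y₁,Y₂], b(X₁)ᵀY₂ − b(X₂)ᵀY₁ + 3b(X₁)Y₂ − 3b(X₂)Y₁⟩. -/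
open scoped RealInnerProductSpace

noncomputable section

/-- Levi-Civita covariant derivative of a right-invariant metric in right
trivialization, written through the bracket `br` and the transpose `adT` of `ad`:
`∇_X Y = (1/2) ad(X)ᵀ Y + (1/2) ad(Y)ᵀ X - (1/2) [X, Y]`. -/
def nablaR {L : Type*} [AddCommGroup L] [Module ℝ L]
    (br adT : L → L → L) (X Y : L) : L :=
  (1 / 2 : ℝ) • adT X Y + (1 / 2 : ℝ) • adT Y X - (1 / 2 : ℝ) • br X Y

/-- Curvature of a right-invariant metric in right trivialization:
`R(X,Y)Z = ∇_X ∇_Y Z - ∇_Y ∇_X Z + ∇_{[X,Y]} Z`. -/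
def curvR {L : Type*} [AddCommGroup L] [Module ℝ L]
    (br adT : L → L → L) (X Y Z : L) : L :=
  nablaR br adT X (nablaR br adT Y Z) - nablaR br adT Y (nablaR br adT X Z)
    + nablaR br adT (br X Y) Z

/-- The semidirect product Lie bracket on `G × H` determined by the brackets of
`G` and `H` and the action `b : G → End(H)`. -/
def sdBr {G H : Type*} [AddCommGroup G] [Module ℝ G] [AddCommGroup H] [Module ℝ H]
    (brG : G →ₗ[ℝ] G →ₗ[ℝ] G) (brH : H →ₗ[ℝ] H →ₗ[ℝ] H)
    (b : G →ₗ[ℝ] H →ₗ[ℝ] H) (p q : G × H) : G × H :=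
  (brG p.1 q.1, brH p.2 q.2 + b p.1 q.2 - b q.1 p.2)

/-!
For a skew bracket, `∇_x` is skew-adjoint, `∇_x x = ad(x)ᵀ x`, and `∇_x y`, `∇_y x` are
`(1/2) (ad(x)ᵀ y + ad(y)ᵀ x) ∓ (1/2) [x, y]`. Hence `⟨R(x, y) y, x⟩` is the Arnold expression

`(1/4) |ad(x)ᵀ y + ad(y)ᵀ x|² - ⟨ad(x)ᵀ x, ad(y)ᵀ y⟩ - (3/4) |[x, y]|²
  + (1/2) ⟨ad(y)ᵀ x - ad(x)ᵀ y, [x, y]⟩`.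

On the semidirect product
`ad(X₁, Y₁)ᵀ (X₂, Y₂) = (ad(X₁)ᵀ X₂ - h(Y₁, Y₂), ad(Y₁)ᵀ Y₂ + b(X₁)ᵀ Y₂)`;
substituting this into the Arnold expression and subtracting the same expression for the two factors
leaves the mixed terms, once `⟨h(Y₁, Y₂) - h(Y₂, Y₁), [X₁, X₂]⟩` is rewritten through
`b([X₁, X₂]) = [b(X₁), b(X₂)]`.
-/

section Arnold

variable {L : Type*} [AddCommGroup L] [Module ℝ L] {B : LinearMap.BilinForm ℝ L}
  {br adT : L → L → L}

theorem bilin_nablaR (hadT : ∀ x y z, B (adT x y) z = B y (br x z)) (x y z : L) :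
    B (nablaR br adT x y) z =
      (1 / 2) * B y (br x z) + (1 / 2) * B x (br y z) - (1 / 2) * B (br x y) z := by
  simp only [nablaR, map_add, map_sub, map_smul, LinearMap.add_apply, LinearMap.sub_apply,
    LinearMap.smul_apply, smul_eq_mul, hadT]

theorem bilin_nablaR_left_eq_neg_right (hB : B.IsSymm) (hbr : ∀ x y, -br x y = br y x)
    (hadT : ∀ x y z, B (adT x y) z = B y (br x z)) (x y z : L) :
    B (nablaR br adT x y) z = -B y (nablaR br adT x z) := by
  rw [hB.eq y, bilin_nablaR hadT, bilin_nablaR hadT, hB.eq (br x y), hB.eq (br x z), ← hbr y z,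
    map_neg]
  ring

theorem nablaR_self (hbr : ∀ x y, -br x y = br y x) (x : L) :
    nablaR br adT x x = adT x x := by
  have br_self : br x x = 0 := by
    linear_combination (norm := module) (-1 / 2 : ℝ) • hbr x x
  rw [nablaR, br_self]
  module

theorem bilin_nablaR_nablaR_swap (hB : B.IsSymm) (hbr : ∀ x y, -br x y = br y x) (x y : L) :
    B (nablaR br adT y x) (nablaR br adT x y) =
      (1 / 4) * B (adT x y + adT y x) (adT x y + adT y x) - (1 / 4) * B (br x y) (br x y) := by
  have nabla_xy : nablaR br adT x y =
      (1 / 2 : ℝ) • (adT x y + adT y x) - (1 / 2 : ℝ) • br x y := by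
    rw [nablaR]; module
  have nabla_yx : nablaR br adT y x =
      (1 / 2 : ℝ) • (adT x y + adT y x) + (1 / 2 : ℝ) • br x y := by
    rw [nablaR, ← hbr x y]; module
  rw [nabla_xy, nabla_yx]
  generalize adT x y + adT y x = s
  simp only [map_add, map_sub, map_smul, LinearMap.add_apply, LinearMap.smul_apply, smul_eq_mul,
    hB.eq (br x y) s]
  ring

theorem bilin_nablaR_br (hB : B.IsSymm) (hbr : ∀ x y, -br x y = br y x)
    (hadT : ∀ x y z, B (adT x y) z = B y (br x z)) (x y : L) :
    B (nablaR br adT (br x y) y) x =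
      (1 / 2) * B (adT y x - adT x y) (br x y) - (1 / 2) * B (br x y) (br x y) := by
  rw [bilin_nablaR hadT, map_sub, LinearMap.sub_apply, hadT, hadT, ← hbr x y, ← hbr x (br x y),
    ← hbr y (br x y), hB.eq (-br y (br x y))]
  simp only [map_neg]
  ring

theorem bilin_curvR (hB : B.IsSymm) (hbr : ∀ x y, -br x y = br y x)
    (hadT : ∀ x y z, B (adT x y) z = B y (br x z)) (x y : L) :
    B (curvR br adT x y y) x =
      (1 / 4) * B (adT x y + adT y x) (adT x y + adT y x) - B (adT x x) (adT y y)
        - (3 / 4) * B (br x y) (br x y) + (1 / 2) * B (adT y x - adT x y) (br x y) := by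
  have hskew := bilin_nablaR_left_eq_neg_right hB hbr hadT
  have nabla_x_nabla_y : B (nablaR br adT x (nablaR br adT y y)) x = -B (adT x x) (adT y y) := by
    rw [hskew, nablaR_self hbr, nablaR_self hbr, hB.eq]
  have nabla_y_nabla_x : B (nablaR br adT y (nablaR br adT x y)) x =
      -B (nablaR br adT y x) (nablaR br adT x y) := by
    rw [hskew, hB.eq]
  rw [curvR, map_add, map_sub, LinearMap.add_apply, LinearMap.sub_apply, nabla_x_nabla_y,
    nabla_y_nabla_x, bilin_nablaR_nablaR_swap hB hbr, bilin_nablaR_br hB hbr hadT]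
  ring

theorem inner_curvR {V : Type*} [NormedAddCommGroup V] [InnerProductSpace ℝ V]
    {br adT : V → V → V} (hbr : ∀ x y, -br x y = br y x)
    (hadT : ∀ x y z, ⟪adT x y, z⟫ = ⟪y, br x z⟫) (x y : V) :
    ⟪curvR br adT x y y, x⟫ =
      (1 / 4) * ‖adT x y + adT y x‖ ^ 2 - ⟪adT x x, adT y y⟫
        - (3 / 4) * ‖br x y‖ ^ 2 + (1 / 2) * ⟪adT y x - adT x y, br x y⟫ := by
  simp only [← real_inner_self_eq_norm_sq]
  exact bilin_curvR (B := innerₗ V) ⟨fun x y => real_inner_comm y x⟩ hbr hadT x y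

end Arnold

section SemidirectAlgebra

variable {G H : Type*} [AddCommGroup G] [AddCommGroup H]

/-- The transpose of `ad` on the semidirect product, in terms of the transposes `adTG`, `adTH` of
`ad` on the factors, the transpose `bT` of the action and the map `h`. -/
def sdAdT (adTG : G → G → G) (adTH : H → H → H) (bT : G → H → H) (h : H → H → G)
    (p q : G × H) : G × H :=
  (adTG p.1 q.1 - h p.2 q.2, adTH p.2 q.2 + bT p.1 q.2)

theorem neg_sdBr [Module ℝ G] [Module ℝ H]
    {brG : G →ₗ[ℝ] G →ₗ[ℝ] G} {brH : H →ₗ[ℝ] H →ₗ[ℝ] H} {b : G →ₗ[ℝ] H →ₗ[ℝ] H}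
    (hG : brG.IsAlt) (hH : brH.IsAlt) (p q : G × H) :
    -sdBr brG brH b p q = sdBr brG brH b q p := by
  rw [sdBr, sdBr, ← hG.neg p.1, ← hH.neg p.2, Prod.neg_mk]
  congr 1
  abel

end SemidirectAlgebra

section SemidirectMetric

variable {G H : Type*} [NormedAddCommGroup G] [InnerProductSpace ℝ G]
  [NormedAddCommGroup H] [InnerProductSpace ℝ H]

/-- The inner product of the orthogonal sum `G ⊕ H`, as a bilinear form on `G × H`; the type
`G × H` carries the sup norm, hence no `InnerProductSpace` instance. -/
def prodInner : LinearMap.BilinForm ℝ (G × H) :=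
  (innerₗ G).compl₁₂ (LinearMap.fst ℝ G H) (LinearMap.fst ℝ G H)
    + (innerₗ H).compl₁₂ (LinearMap.snd ℝ G H) (LinearMap.snd ℝ G H)

theorem prodInner_apply (p q : G × H) : prodInner p q = ⟪p.1, q.1⟫ + ⟪p.2, q.2⟫ := rfl

theorem prodInner_isSymm : (prodInner : LinearMap.BilinForm ℝ (G × H)).IsSymm :=
  ⟨fun p q => by simp only [prodInner_apply, real_inner_comm]⟩

theorem ext_prodInner_right {p q : G × H} (hpq : ∀ r, prodInner p r = prodInner q r) : p = q := by
  refine Prod.ext (ext_inner_right ℝ fun X => ?_) (ext_inner_right ℝ fun Y => ?_)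
  · simpa [prodInner_apply] using hpq (X, 0)
  · simpa [prodInner_apply] using hpq (0, Y)

variable {brG : G →ₗ[ℝ] G →ₗ[ℝ] G} {brH : H →ₗ[ℝ] H →ₗ[ℝ] H} {b : G →ₗ[ℝ] H →ₗ[ℝ] H}
  {h : H → H → G} {adTG : G → G → G} {adTH : H → H → H} {bT : G → H → H}

theorem prodInner_sdAdT_left (hh : ∀ (Y₁ Y₂ : H) (X : G), ⟪h Y₁ Y₂, X⟫ = ⟪b X Y₁, Y₂⟫)
    (hadTG : ∀ X Y Z, ⟪adTG X Y, Z⟫ = ⟪Y, brG X Z⟫)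
    (hadTH : ∀ X Y Z, ⟪adTH X Y, Z⟫ = ⟪Y, brH X Z⟫)
    (hbT : ∀ X Y Z, ⟪bT X Y, Z⟫ = ⟪Y, b X Z⟫) (p q r : G × H) :
    prodInner (sdAdT adTG adTH bT h p q) r = prodInner q (sdBr brG brH b p r) := by
  simp only [prodInner_apply, sdAdT, sdBr, inner_sub_left, inner_add_left, inner_sub_right,
    inner_add_right, hadTG, hadTH, hbT, hh, real_inner_comm q.2 (b r.1 p.2)]
  ring

theorem prodInner_sdAdT_add_swap_self (X₁ X₂ : G) (Y₁ Y₂ : H) :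
    prodInner
        (sdAdT adTG adTH bT h (X₁, Y₁) (X₂, Y₂) + sdAdT adTG adTH bT h (X₂, Y₂) (X₁, Y₁))
        (sdAdT adTG adTH bT h (X₁, Y₁) (X₂, Y₂) + sdAdT adTG adTH bT h (X₂, Y₂) (X₁, Y₁)) =
      ‖adTG X₁ X₂ + adTG X₂ X₁‖ ^ 2
        - 2 * ⟪h Y₁ Y₂ + h Y₂ Y₁, adTG X₁ X₂ + adTG X₂ X₁⟫ + ‖h Y₁ Y₂ + h Y₂ Y₁‖ ^ 2
        + ‖adTH Y₁ Y₂ + adTH Y₂ Y₁‖ ^ 2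
        + 2 * ⟪adTH Y₁ Y₂ + adTH Y₂ Y₁, bT X₁ Y₂ + bT X₂ Y₁⟫ + ‖bT X₁ Y₂ + bT X₂ Y₁‖ ^ 2 := by
  simp only [sdAdT, Prod.mk_add_mk, prodInner_apply, real_inner_self_eq_norm_sq]
  rw [sub_add_sub_comm, add_add_add_comm (adTH Y₁ Y₂), norm_sub_sq_real,
    norm_add_sq_real (adTH Y₁ Y₂ + adTH Y₂ Y₁), real_inner_comm (adTG X₁ X₂ + adTG X₂ X₁)]
  ring

theorem prodInner_sdAdT_self_self (X₁ X₂ : G) (Y₁ Y₂ : H) :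
    prodInner (sdAdT adTG adTH bT h (X₁, Y₁) (X₁, Y₁))
        (sdAdT adTG adTH bT h (X₂, Y₂) (X₂, Y₂)) =
      ⟪adTG X₁ X₁, adTG X₂ X₂⟫ - ⟪h Y₁ Y₁, adTG X₂ X₂⟫ - ⟪h Y₂ Y₂, adTG X₁ X₁⟫
        + ⟪h Y₁ Y₁, h Y₂ Y₂⟫ + ⟪adTH Y₁ Y₁, adTH Y₂ Y₂⟫ + ⟪adTH Y₁ Y₁, bT X₂ Y₂⟫
        + ⟪adTH Y₂ Y₂, bT X₁ Y₁⟫ + ⟪bT X₁ Y₁, bT X₂ Y₂⟫ := by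
  simp only [sdAdT, prodInner_apply, inner_sub_left, inner_sub_right, inner_add_left,
    inner_add_right]
  rw [real_inner_comm (adTG X₁ X₁) (h Y₂ Y₂), real_inner_comm (bT X₁ Y₁) (adTH Y₂ Y₂)]
  ring

theorem prodInner_sdBr_self (X₁ X₂ : G) (Y₁ Y₂ : H) :
    prodInner (sdBr brG brH b (X₁, Y₁) (X₂, Y₂)) (sdBr brG brH b (X₁, Y₁) (X₂, Y₂)) =
      ‖brG X₁ X₂‖ ^ 2 + ‖brH Y₁ Y₂‖ ^ 2 + 2 * ⟪brH Y₁ Y₂, b X₁ Y₂ - b X₂ Y₁⟫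
        + ‖b X₁ Y₂ - b X₂ Y₁‖ ^ 2 := by
  simp only [sdBr, prodInner_apply, real_inner_self_eq_norm_sq]
  rw [add_sub_assoc, norm_add_sq_real]
  ring

theorem prodInner_sdAdT_sub_swap_sdBr (X₁ X₂ : G) (Y₁ Y₂ : H) :
    prodInner
        (sdAdT adTG adTH bT h (X₂, Y₂) (X₁, Y₁) - sdAdT adTG adTH bT h (X₁, Y₁) (X₂, Y₂))
        (sdBr brG brH b (X₁, Y₁) (X₂, Y₂)) =
      ⟪adTG X₂ X₁ - adTG X₁ X₂, brG X₁ X₂⟫ + ⟪h Y₁ Y₂ - h Y₂ Y₁, brG X₁ X₂⟫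
        + ⟪adTH Y₂ Y₁ - adTH Y₁ Y₂, brH Y₁ Y₂⟫
        + ⟪adTH Y₂ Y₁ - adTH Y₁ Y₂, b X₁ Y₂ - b X₂ Y₁⟫
        + ⟪brH Y₁ Y₂, bT X₂ Y₁ - bT X₁ Y₂⟫ + ⟪bT X₂ Y₁ - bT X₁ Y₂, b X₁ Y₂ - b X₂ Y₁⟫ := by
  simp only [sdAdT, sdBr, Prod.mk_sub_mk, prodInner_apply]
  rw [add_sub_assoc, real_inner_comm (bT X₂ Y₁ - bT X₁ Y₂) (brH Y₁ Y₂)]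
  simp only [inner_sub_left, inner_sub_right, inner_add_left, inner_add_right]
  ring

theorem inner_h_br (hbhom : ∀ X₁ X₂ : G, b (brG X₁ X₂) = b X₁ ∘ₗ b X₂ - b X₂ ∘ₗ b X₁)
    (hh : ∀ (Y₁ Y₂ : H) (X : G), ⟪h Y₁ Y₂, X⟫ = ⟪b X Y₁, Y₂⟫)
    (hbT : ∀ X Y Z, ⟪bT X Y, Z⟫ = ⟪Y, b X Z⟫) (X₁ X₂ : G) (Y₁ Y₂ : H) :
    ⟪h Y₁ Y₂, brG X₁ X₂⟫ = ⟪bT X₁ Y₂, b X₂ Y₁⟫ - ⟪bT X₂ Y₂, b X₁ Y₁⟫ := by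
  rw [hh, hbhom, real_inner_comm, hbT, hbT, ← inner_sub_right]
  rfl

end SemidirectMetric

theorem semidirect_curvature_formula_general
    {G H : Type*} [NormedAddCommGroup G] [InnerProductSpace ℝ G]
    [NormedAddCommGroup H] [InnerProductSpace ℝ H]
    (brG : G →ₗ[ℝ] G →ₗ[ℝ] G) (brH : H →ₗ[ℝ] H →ₗ[ℝ] H) (hG : brG.IsAlt) (hH : brH.IsAlt)
    (b : G →ₗ[ℝ] H →ₗ[ℝ] H)
    (hbhom : ∀ X₁ X₂ : G, b (brG X₁ X₂) = b X₁ ∘ₗ b X₂ - b X₂ ∘ₗ b X₁)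
    (h : H → H → G) (hh : ∀ (Y₁ Y₂ : H) (X : G), ⟪h Y₁ Y₂, X⟫ = ⟪b X Y₁, Y₂⟫)
    (adTG : G → G → G) (hadTG : ∀ X Y Z, ⟪adTG X Y, Z⟫ = ⟪Y, brG X Z⟫)
    (adTH : H → H → H) (hadTH : ∀ X Y Z, ⟪adTH X Y, Z⟫ = ⟪Y, brH X Z⟫)
    (bT : G → H → H) (hbT : ∀ X Y Z, ⟪bT X Y, Z⟫ = ⟪Y, b X Z⟫)
    (adTP : G × H → G × H → G × H)
    (hadTP : ∀ p q r : G × H,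
      ⟪(adTP p q).1, r.1⟫ + ⟪(adTP p q).2, r.2⟫ =
        ⟪q.1, (sdBr brG brH b p r).1⟫ + ⟪q.2, (sdBr brG brH b p r).2⟫)
    (X₁ X₂ : G) (Y₁ Y₂ : H) :
    ⟪(curvR (sdBr brG brH b) adTP (X₁, Y₁) (X₂, Y₂) (X₂, Y₂)).1, X₁⟫
      + ⟪(curvR (sdBr brG brH b) adTP (X₁, Y₁) (X₂, Y₂) (X₂, Y₂)).2, Y₁⟫ =
      ⟪curvR (fun a c => brG a c) adTG X₁ X₂ X₂, X₁⟫
      + ⟪curvR (fun a c => brH a c) adTH Y₁ Y₂ Y₂, Y₁⟫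
      + (1 / 4 : ℝ) * ‖h Y₁ Y₂ + h Y₂ Y₁‖ ^ 2
      - ⟪h Y₁ Y₁, h Y₂ Y₂⟫
      - (1 / 2 : ℝ) * ⟪h Y₁ Y₂ + h Y₂ Y₁, adTG X₁ X₂ + adTG X₂ X₁⟫
      + ⟪h Y₁ Y₁, adTG X₂ X₂⟫
      + ⟪h Y₂ Y₂, adTG X₁ X₁⟫
      + (1 / 4 : ℝ) * ‖bT X₁ Y₂ + bT X₂ Y₁‖ ^ 2
      - (3 / 4 : ℝ) * ‖b X₁ Y₂ - b X₂ Y₁‖ ^ 2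
      - ⟪bT X₁ Y₁, bT X₂ Y₂⟫
      - (1 / 2 : ℝ) * ⟪bT X₁ Y₁, b X₂ Y₂⟫
      - (1 / 2 : ℝ) * ⟪bT X₂ Y₂, b X₁ Y₁⟫
      + ⟪bT X₁ Y₂, b X₂ Y₁⟫
      + ⟪bT X₂ Y₁, b X₁ Y₂⟫
      - (1 / 2 : ℝ) * ⟪bT X₁ Y₂, b X₁ Y₂⟫
      - (1 / 2 : ℝ) * ⟪bT X₂ Y₁, b X₂ Y₁⟫
      - ⟪adTH Y₁ Y₁, bT X₂ Y₂⟫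
      - ⟪adTH Y₂ Y₂, bT X₁ Y₁⟫
      + (1 / 2 : ℝ) * ⟪adTH Y₁ Y₂, bT X₁ Y₂ + bT X₂ Y₁ - b X₁ Y₂ + b X₂ Y₁⟫
      + (1 / 2 : ℝ) * ⟪adTH Y₂ Y₁, bT X₁ Y₂ + bT X₂ Y₁ - b X₂ Y₁ + b X₁ Y₂⟫
      - (1 / 2 : ℝ) * ⟪brH Y₁ Y₂,
          bT X₁ Y₂ - bT X₂ Y₁ + (3 : ℝ) • b X₁ Y₂ - (3 : ℝ) • b X₂ Y₁⟫ := by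
  have sdAdT_transpose := prodInner_sdAdT_left hh hadTG hadTH hbT
  have adTP_eq : adTP = sdAdT adTG adTH bT h := by
    funext p q
    exact ext_prodInner_right fun r => (hadTP p q r).trans (sdAdT_transpose p q r).symm
  subst adTP_eq
  rw [← prodInner_apply _ (X₁, Y₁),
    bilin_curvR prodInner_isSymm (neg_sdBr hG hH) sdAdT_transpose,
    prodInner_sdAdT_add_swap_self, prodInner_sdAdT_self_self, prodInner_sdBr_self,
    prodInner_sdAdT_sub_swap_sdBr, inner_curvR hG.neg hadTG, inner_curvR hH.neg hadTH,
    inner_sub_left (h Y₁ Y₂), inner_h_br hbhom hh hbT, inner_h_br hbhom hh hbT]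
  simp only [inner_add_left, inner_add_right, inner_sub_left, inner_sub_right,
    real_inner_smul_right]
  ring

/-- Curvature formula for a semidirect product `𝔤 ⋉ 𝔥` with right invariant
metric (Proposition 2 of the paper). -/
theorem semidirect_curvature_formula
    {G H : Type*}
    [NormedAddCommGroup G] [InnerProductSpace ℝ G] [FiniteDimensional ℝ G]
    [NormedAddCommGroup H] [InnerProductSpace ℝ H] [FiniteDimensional ℝ H]
    (brG : G →ₗ[ℝ] G →ₗ[ℝ] G) (brH : H →ₗ[ℝ] H →ₗ[ℝ] H)
    (hGalt : ∀ X : G, brG X X = 0)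
    (hGjac : ∀ X Y Z : G, brG X (brG Y Z) + brG Y (brG Z X) + brG Z (brG X Y) = 0)
    (hHalt : ∀ Y : H, brH Y Y = 0)
    (hHjac : ∀ X Y Z : H, brH X (brH Y Z) + brH Y (brH Z X) + brH Z (brH X Y) = 0)
    (b : G →ₗ[ℝ] H →ₗ[ℝ] H)
    (hbhom : ∀ X₁ X₂ : G, b (brG X₁ X₂) = b X₁ ∘ₗ b X₂ - b X₂ ∘ₗ b X₁)
    (hbder : ∀ (X : G) (Y₁ Y₂ : H), b X (brH Y₁ Y₂) = brH (b X Y₁) Y₂ + brH Y₁ (b X Y₂))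
    (h : H → H → G)
    (hh : ∀ (Y₁ Y₂ : H) (X : G), ⟪h Y₁ Y₂, X⟫ = ⟪b X Y₁, Y₂⟫)
    (adTP : G × H → G × H → G × H)
    (hadTP : ∀ p q r : G × H,
      ⟪(adTP p q).1, r.1⟫ + ⟪(adTP p q).2, r.2⟫ =
        ⟪q.1, (sdBr brG brH b p r).1⟫ + ⟪q.2, (sdBr brG brH b p r).2⟫)
    (X₁ X₂ : G) (Y₁ Y₂ : H) :
    ⟪(curvR (sdBr brG brH b) adTP (X₁, Y₁) (X₂, Y₂) (X₂, Y₂)).1, X₁⟫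
      + ⟪(curvR (sdBr brG brH b) adTP (X₁, Y₁) (X₂, Y₂) (X₂, Y₂)).2, Y₁⟫ =
      ⟪curvR (fun a c => brG a c) (fun a c => LinearMap.adjoint (brG a) c) X₁ X₂ X₂, X₁⟫
      + ⟪curvR (fun a c => brH a c) (fun a c => LinearMap.adjoint (brH a) c) Y₁ Y₂ Y₂, Y₁⟫
      + (1 / 4 : ℝ) * ‖h Y₁ Y₂ + h Y₂ Y₁‖ ^ 2
      - ⟪h Y₁ Y₁, h Y₂ Y₂⟫
      - (1 / 2 : ℝ) * ⟪h Y₁ Y₂ + h Y₂ Y₁,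
          LinearMap.adjoint (brG X₁) X₂ + LinearMap.adjoint (brG X₂) X₁⟫
      + ⟪h Y₁ Y₁, LinearMap.adjoint (brG X₂) X₂⟫
      + ⟪h Y₂ Y₂, LinearMap.adjoint (brG X₁) X₁⟫
      + (1 / 4 : ℝ) * ‖LinearMap.adjoint (b X₁) Y₂ + LinearMap.adjoint (b X₂) Y₁‖ ^ 2
      - (3 / 4 : ℝ) * ‖b X₁ Y₂ - b X₂ Y₁‖ ^ 2
      - ⟪LinearMap.adjoint (b X₁) Y₁, LinearMap.adjoint (b X₂) Y₂⟫
      - (1 / 2 : ℝ) * ⟪LinearMap.adjoint (b X₁) Y₁, b X₂ Y₂⟫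
      - (1 / 2 : ℝ) * ⟪LinearMap.adjoint (b X₂) Y₂, b X₁ Y₁⟫
      + ⟪LinearMap.adjoint (b X₁) Y₂, b X₂ Y₁⟫
      + ⟪LinearMap.adjoint (b X₂) Y₁, b X₁ Y₂⟫
      - (1 / 2 : ℝ) * ⟪LinearMap.adjoint (b X₁) Y₂, b X₁ Y₂⟫
      - (1 / 2 : ℝ) * ⟪LinearMap.adjoint (b X₂) Y₁, b X₂ Y₁⟫
      - ⟪LinearMap.adjoint (brH Y₁) Y₁, LinearMap.adjoint (b X₂) Y₂⟫
      - ⟪LinearMap.adjoint (brH Y₂) Y₂, LinearMap.adjoint (b X₁) Y₁⟫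
      + (1 / 2 : ℝ) * ⟪LinearMap.adjoint (brH Y₁) Y₂,
          LinearMap.adjoint (b X₁) Y₂ + LinearMap.adjoint (b X₂) Y₁ - b X₁ Y₂ + b X₂ Y₁⟫
      + (1 / 2 : ℝ) * ⟪LinearMap.adjoint (brH Y₂) Y₁,
          LinearMap.adjoint (b X₁) Y₂ + LinearMap.adjoint (b X₂) Y₁ - b X₂ Y₁ + b X₁ Y₂⟫
      - (1 / 2 : ℝ) * ⟪brH Y₁ Y₂,
          LinearMap.adjoint (b X₁) Y₂ - LinearMap.adjoint (b X₂) Y₁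
            + (3 : ℝ) • b X₁ Y₂ - (3 : ℝ) • b X₂ Y₁⟫ := by
  exact semidirect_curvature_formula_general brG brH hGalt hHalt b hbhom h hh
    _ (fun X Y Z => LinearMap.adjoint_inner_left (brG X) Z Y)
    _ (fun X Y Z => LinearMap.adjoint_inner_left (brH X) Z Y)
    _ (fun X Y Z => LinearMap.adjoint_inner_left (b X) Z Y)
    adTP hadTP X₁ X₂ Y₁ Y₂
end
end

section
/- Let 𝔤 be a finite-dimensional real Lie algebra with an Ad-invariant inner product, i.e. ⟨[X,Y],Z⟩ + ⟨Y,[X,Z]⟩ = 0 for all X,Y,Z ∈ 𝔤, and consider the semidirect product 𝔤 ⋉ 𝔤 with action b(X) = ad(X) (conjugation). Then a differentiable curve (u,v) : ℝ → 𝔤 × 𝔤 satisfies the geodesic equation (u,v)' = −ad(u,v)ᵀ(u,v) of the right-invariant metric on 𝔤 ⋉ 𝔤 if and only if u'(t) = 0 and v'(t) = [u(t),v(t)] for all t. -/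
open scoped RealInnerProductSpace

noncomputable section

theorem prod_ext_inner_right (𝕜 : Type*) {E F : Type*} [RCLike 𝕜]
    [NormedAddCommGroup E] [InnerProductSpace 𝕜 E]
    [NormedAddCommGroup F] [InnerProductSpace 𝕜 F] {p q : E × F}
    (h : ∀ r : E × F,
      inner 𝕜 p.1 r.1 + inner 𝕜 p.2 r.2 = inner 𝕜 q.1 r.1 + inner 𝕜 q.2 r.2) : p = q :=
  WithLp.toLp_injective 2 <| ext_inner_right 𝕜 fun r => h r.ofLp

theorem deriv_prodMk {𝕜 E F : Type*} [NontriviallyNormedField 𝕜]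
    [NormedAddCommGroup E] [NormedSpace 𝕜 E] [NormedAddCommGroup F] [NormedSpace 𝕜 F]
    {f : 𝕜 → E} {g : 𝕜 → F} {x : 𝕜}
    (hf : DifferentiableAt 𝕜 f x) (hg : DifferentiableAt 𝕜 g x) :
    deriv (fun y => (f y, g y)) x = (deriv f x, deriv g x) :=
  (hf.hasDerivAt.prodMk hg.hasDerivAt).deriv

/-- The bracket of `𝔤 ⋉ 𝔤` for the action of `𝔤` on itself by `ad`, where `br` is the bracket
of `𝔤`. -/
def conjBracket {R M : Type*} [CommRing R] [AddCommGroup M] [Module R M]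
    (br : M →ₗ[R] M →ₗ[R] M) (p q : M × M) : M × M :=
  (br p.1 q.1, br p.2 q.2 + br p.1 q.2 - br q.1 p.2)

section InnerProductSpace

variable {G : Type*} [NormedAddCommGroup G] [InnerProductSpace ℝ G] {br : G →ₗ[ℝ] G →ₗ[ℝ] G}

/-- Ad-invariance of the inner product, in infinitesimal form: every `ad X = br X` is
skew-adjoint. -/
def IsAdInvariant (br : G →ₗ[ℝ] G →ₗ[ℝ] G) : Prop :=
  ∀ X Y Z : G, ⟪br X Y, Z⟫ + ⟪Y, br X Z⟫ = 0

/-- `adT p` is the adjoint of `ad p = conjBracket br p` on `𝔤 ⋉ 𝔤`, for the sum of the inner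
products of the two factors. The pairing is written out because Mathlib's norm on `G × G` is the
sup norm. -/
def IsConjAdTranspose (br : G →ₗ[ℝ] G →ₗ[ℝ] G) (adT : G × G → G × G → G × G) : Prop :=
  ∀ p q r : G × G,
    ⟪(adT p q).1, r.1⟫ + ⟪(adT p q).2, r.2⟫ =
      ⟪q.1, (conjBracket br p r).1⟫ + ⟪q.2, (conjBracket br p r).2⟫

theorem IsAdInvariant.inner_bracket_right (hinv : IsAdInvariant br) (X Y Z : G) :
    ⟪Y, br X Z⟫ = -⟪br X Y, Z⟫ :=
  eq_neg_of_add_eq_zero_right (hinv X Y Z)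

theorem IsAdInvariant.inner_conjBracket (hinv : IsAdInvariant br) (halt : br.IsAlt)
    (p q r : G × G) :
    ⟪q.1, (conjBracket br p r).1⟫ + ⟪q.2, (conjBracket br p r).2⟫ =
      ⟪-(br p.1 q.1 + br p.2 q.2), r.1⟫ + ⟪-br (p.1 + p.2) q.2, r.2⟫ := by
  have hswap : -br r.1 p.2 = br p.2 r.1 := halt.neg r.1 p.2
  simp only [conjBracket, sub_eq_add_neg, hswap, inner_add_right, hinv.inner_bracket_right,
    map_add, LinearMap.add_apply, inner_neg_left, inner_add_left]
  ring

theorem IsConjAdTranspose.eq_of_isAdInvariant {adT : G × G → G × G → G × G}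
    (hadT : IsConjAdTranspose br adT) (hinv : IsAdInvariant br) (halt : br.IsAlt)
    (p q : G × G) :
    adT p q = (-(br p.1 q.1 + br p.2 q.2), -br (p.1 + p.2) q.2) :=
  prod_ext_inner_right ℝ fun r => (hadT p q r).trans (hinv.inner_conjBracket halt p q r)

theorem IsConjAdTranspose.apply_self_of_isAdInvariant {adT : G × G → G × G → G × G}
    (hadT : IsConjAdTranspose br adT) (hinv : IsAdInvariant br) (halt : br.IsAlt)
    (p : G × G) : adT p p = (0, -br p.1 p.2) := by
  simp [hadT.eq_of_isAdInvariant hinv halt, halt.self_eq_zero]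

theorem conjugation_geodesic_equation_ad_invariant_general
    (halt : br.IsAlt) (hinv : IsAdInvariant br) {adT : G × G → G × G → G × G}
    (hadT : IsConjAdTranspose br adT) {u v : ℝ → G} {t : ℝ}
    (hu : DifferentiableAt ℝ u t) (hv : DifferentiableAt ℝ v t) :
    deriv (fun s => (u s, v s)) t = -adT (u t, v t) (u t, v t) ↔
      deriv u t = 0 ∧ deriv v t = br (u t) (v t) := by
  rw [deriv_prodMk hu hv, hadT.apply_self_of_isAdInvariant hinv halt, Prod.neg_mk, neg_zero,
    neg_neg, Prod.mk.injEq]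

end InnerProductSpace

/-- For an Ad-invariant inner product, the geodesic equation on `𝔤 ⋉ 𝔤`
(conjugation action) becomes `u_t = 0`, `v_t = [u,v]`. -/
theorem conjugation_geodesic_equation_ad_invariant
    {G : Type*} [NormedAddCommGroup G] [InnerProductSpace ℝ G] [FiniteDimensional ℝ G]
    (brG : G →ₗ[ℝ] G →ₗ[ℝ] G)
    (hGalt : ∀ X : G, brG X X = 0)
    (hGjac : ∀ X Y Z : G, brG X (brG Y Z) + brG Y (brG Z X) + brG Z (brG X Y) = 0)
    (hinv : ∀ X Y Z : G, ⟪brG X Y, Z⟫ + ⟪Y, brG X Z⟫ = 0)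
    (adTP : G × G → G × G → G × G)
    (hadTP : ∀ p q r : G × G,
      ⟪(adTP p q).1, r.1⟫ + ⟪(adTP p q).2, r.2⟫ =
        ⟪q.1, brG p.1 r.1⟫ + ⟪q.2, brG p.2 r.2 + brG p.1 r.2 - brG r.1 p.2⟫)
    (u v : ℝ → G) (hu : Differentiable ℝ u) (hv : Differentiable ℝ v) :
    (∀ t : ℝ, deriv (fun s => (u s, v s)) t = - adTP (u t, v t) (u t, v t)) ↔
      ((∀ t : ℝ, deriv u t = 0) ∧ (∀ t : ℝ, deriv v t = brG (u t) (v t))) :=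
  (forall_congr' fun t =>
    conjugation_geodesic_equation_ad_invariant_general hGalt hinv hadTP (hu t) (hv t)).trans
    forall_and
end
end
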